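/- Let t₀ ≥ 1, b > 1, and let σ, β, α be real numbers with 0 < σ < β < 1, α > 0, bα < 1, and β − σ = 1 − (b−1)α. Then there exists a constant C > 0 such that for every t ≥ t₀ one has ∫_{t₀}^{t} s^{2/(b+1)} e^{−βs} e^{−bα(t−s)} ds ≤ C e^{−αt}. -/

import Mathlib

open intervalIntegral

/-- Key integral estimate for the term `I₁` over `[t₀, t]`:
`∫_{t₀}^{t} s^{2/(b+1)} e^{-βs} e^{-bα(t-s)} ds ≤ C e^{-αt}`. -/
theorem integral_estimate_I1 (t₀ b σ β α : ℝ) (ht₀ : 1 ≤ t₀) (hb : 1 < b)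
    (hσ : 0 < σ) (hσβ : σ < β) (hβ : β < 1) (hα : 0 < α) (hbα : b * α < 1)
    (hrel : β - σ = 1 - (b - 1) * α) :
    ∃ C : ℝ, 0 < C ∧ ∀ t : ℝ, t₀ ≤ t →
      (∫ s in t₀..t, s ^ (2 / (b + 1)) * Real.exp (-β * s) *
          Real.exp (-(b * α) * (t - s))) ≤ C * Real.exp (-α * t) := by
  have hd : 0 < 1 - b * α := by linarith
  refine ⟨1 / σ * (1 / (1 - b * α)), by positivity, fun t ht => ?_⟩
  set d := 1 - b * α with hd'
  have hder : ∀ s ∈ Set.uIcc t₀ t, HasDerivAt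
      (fun s : ℝ => Real.exp (-α * t) / σ * (-(1 / d) * Real.exp (-d * s)))
      (Real.exp (-α * t) / σ * Real.exp (-d * s)) s := by
    intro s _
    have h1 : HasDerivAt (fun s : ℝ => -d * s) (-d) s := by
      simpa using (hasDerivAt_id s).const_mul (-d)
    have h2 := (h1.exp.const_mul (-(1 / d))).const_mul (Real.exp (-α * t) / σ)
    have h3 : Real.exp (-α * t) / σ * (-(1 / d) * (Real.exp (-d * s) * -d)) =
        Real.exp (-α * t) / σ * Real.exp (-d * s) := by
      have : d ≠ 0 := hd.ne'
      field_simp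
    rw [h3] at h2
    exact h2
  have hint : IntervalIntegrable (fun s : ℝ => Real.exp (-α * t) / σ * Real.exp (-d * s))
      MeasureTheory.volume t₀ t := by
    apply Continuous.intervalIntegrable
    fun_prop
  have hint0 : IntervalIntegrable (fun s : ℝ => s ^ (2 / (b + 1)) * Real.exp (-β * s) *
          Real.exp (-(b * α) * (t - s))) MeasureTheory.volume t₀ t := by
    have hp : 0 ≤ 2 / (b + 1) := by positivity
    apply Continuous.intervalIntegrable
    exact ((Real.continuous_rpow_const hp).mul (by fun_prop)).mul (by fun_prop)
  have heq := integral_eq_sub_of_hasDerivAt hder hint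
  calc _ ≤ ∫ s in t₀..t, Real.exp (-α * t) / σ * Real.exp (-d * s) := by
        apply integral_mono_on ht hint0 hint
        intro s hs
        have hs1 : 1 ≤ s := ht₀.trans hs.1
        have hp1 : 2 / (b + 1) ≤ 1 := by
          rw [div_le_one (by linarith)]
          linarith
        have h1 : s ^ (2 / (b + 1)) ≤ s := by
          simpa using Real.rpow_le_rpow_of_exponent_le hs1 hp1
        have h2 : s ≤ Real.exp (σ * s) / σ := by
          rw [le_div_iff₀ hσ]
          linarith [Real.add_one_le_exp (σ * s)]
        have h3 : 0 ≤ (b - 1) * α * (t - s) :=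
          mul_nonneg (mul_nonneg (by linarith) hα.le) (by linarith [hs.2])
        calc _ ≤ Real.exp (σ * s) / σ * Real.exp (-β * s) *
                Real.exp (-(b * α) * (t - s)) := by
              gcongr
              exact h1.trans h2
          _ = Real.exp (σ * s + -β * s + -(b * α) * (t - s)) / σ := by
              rw [Real.exp_add, Real.exp_add]
              ring
          _ ≤ Real.exp (-α * t + -d * s) / σ := by
              refine div_le_div_of_nonneg_right (Real.exp_le_exp.mpr ?_) hσ.le
              have : β = σ + (1 - (b - 1) * α) := by linarith
              rw [this, hd']
              linarith
          _ = _ := by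
              rw [Real.exp_add]
              ring
    _ ≤ _ := by
        rw [heq]
        have h1 : Real.exp (-d * t₀) ≤ 1 := by
          rw [Real.exp_le_one_iff]
          nlinarith
        have h2 := Real.exp_pos (-d * t)
        have h4 : 0 ≤ Real.exp (-α * t) / σ * (1 / d) := by positivity
        have h5 := mul_le_mul_of_nonneg_left
          (show Real.exp (-d * t₀) - Real.exp (-d * t) ≤ 1 by linarith) h4
        calc _ = Real.exp (-α * t) / σ * (1 / d) *
              (Real.exp (-d * t₀) - Real.exp (-d * t)) := by ring
          _ ≤ _ := h5
          _ = _ := by ring
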